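/- arXiv:2602.04232 — 4 statements merged into one kernel-verified Lean document; each statement's English description precedes it below -/
import Mathlib

section
/- Let p be an odd prime, k a positive integer, and θ an integer not divisible by p. Define q : ℤ/p^kℤ → ℚ/2ℤ by q(ā) = 2θa²/p^k mod 2ℤ, where a ∈ ℤ is any representative of ā (this is well defined). Then there exists a group automorphism f of ℤ/p^kℤ with q(f(x)) = −q(x) for all x if and only if p ≡ 1 (mod 4). -/
/-- The group `ℚ/2ℤ`. -/
abbrev QModTwo : Type := ℚ ⧸ AddSubgroup.zmultiples (2 : ℚ)

/-- The canonical projection `ℚ → ℚ/2ℤ`. -/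
noncomputable def toQ2 : ℚ →+ QModTwo := QuotientAddGroup.mk' _

/-- The discriminant form `q(a) = 2θa²/p^k mod 2ℤ` on `ℤ/p^kℤ`. -/
noncomputable def q8 (p k : ℕ) (θ : ℤ) (a : ZMod (p ^ k)) : QModTwo :=
  toQ2 (2 * (θ : ℚ) * (a.val : ℚ) ^ 2 / (p : ℚ) ^ k)

/-!
Clearing denominators, `q y = -q x` says `p ^ k ∣ θ * (y ^ 2 + x ^ 2)`, and `θ` can be cancelled.
So an anti-automorphism `f` satisfies `f 1 ^ 2 = -1`, and conversely multiplication by a square root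
of `-1` is an anti-automorphism. Finally, a square root `a` of `-1` modulo an odd `n` lifts to the
square root `a ^ n ^ j` modulo `n ^ (j + 1)`, since `x ≡ y` modulo `n` implies
`x ^ n ^ j ≡ y ^ n ^ j` modulo `n ^ (j + 1)`; for `n = p` prime the first supplement to quadratic
reciprocity concludes.
-/

lemma toQ2_eq_zero_iff {r : ℚ} : toQ2 r = 0 ↔ ∃ m : ℤ, m * 2 = r := by
  simp only [toQ2, QuotientAddGroup.mk'_apply, QuotientAddGroup.eq_zero_iff,
    AddSubgroup.mem_zmultiples_iff, zsmul_eq_mul]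

lemma toQ2_two_mul_intCast_div_eq_zero_iff {n : ℕ} [NeZero n] {m : ℤ} :
    toQ2 (2 * m / n) = 0 ↔ (m : ZMod n) = 0 := by
  have hn : (n : ℚ) ≠ 0 := NeZero.ne _
  rw [toQ2_eq_zero_iff, ZMod.intCast_zmod_eq_zero_iff_dvd]
  refine exists_congr fun c ↦ ?_
  rw [eq_div_iff hn, ← @Int.cast_inj ℚ, Int.cast_mul, Int.cast_natCast]
  constructor <;> intro h <;> linarith

lemma q8_eq_neg_iff {n k : ℕ} [NeZero n] {θ : ℤ} (hθ : IsCoprime (n : ℤ) θ) {x y : ZMod (n ^ k)} :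
    q8 n k θ y = -q8 n k θ x ↔ y ^ 2 + x ^ 2 = 0 := by
  have hθ_unit : IsUnit (θ : ZMod (n ^ k)) := by
    rw [ZMod.coe_int_isUnit_iff_isCoprime, Nat.cast_pow]
    exact hθ.pow_left
  have hsum : q8 n k θ y + q8 n k θ x =
      toQ2 (2 * (θ * ((y.val : ℤ) ^ 2 + (x.val : ℤ) ^ 2) : ℤ) / (n ^ k : ℕ)) := by
    rw [q8, q8, ← map_add]
    congr 1
    push_cast
    ring
  have hcast : ((θ * ((y.val : ℤ) ^ 2 + (x.val : ℤ) ^ 2) : ℤ) : ZMod (n ^ k)) =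
      θ * (y ^ 2 + x ^ 2) := by
    push_cast
    simp only [ZMod.natCast_zmod_val]
  rw [eq_neg_iff_add_eq_zero, hsum, toQ2_two_mul_intCast_div_eq_zero_iff, hcast,
    hθ_unit.mul_right_eq_zero]

lemma exists_addEquiv_sq_add_sq_eq_zero_iff {R : Type*} [CommRing R] :
    (∃ f : R ≃+ R, ∀ x, f x ^ 2 + x ^ 2 = 0) ↔ IsSquare (-1 : R) := by
  constructor
  · rintro ⟨f, hf⟩
    refine ⟨f 1, ?_⟩
    linear_combination -hf 1
  · rintro ⟨i, hi⟩
    obtain ⟨u, rfl⟩ : IsUnit i := isUnit_mul_self_iff.mp (hi ▸ isUnit_one.neg)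
    refine ⟨DistribMulAction.toAddEquiv R u, fun x ↦ ?_⟩
    rw [DistribMulAction.toAddEquiv_apply, Units.smul_def, smul_eq_mul]
    linear_combination -x ^ 2 * hi

lemma isSquare_neg_one_zmod_iff_exists_dvd_sq_add_one {n : ℕ} :
    IsSquare (-1 : ZMod n) ↔ ∃ a : ℤ, (n : ℤ) ∣ a ^ 2 + 1 := by
  simp only [isSquare_iff_exists_sq, ZMod.intCast_surjective.exists, eq_comm (a := (-1 : ZMod n)),
    ← ZMod.intCast_zmod_eq_zero_iff_dvd, Int.cast_add, Int.cast_pow, Int.cast_one,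
    add_eq_zero_iff_eq_neg]

lemma isSquare_neg_one_zmod_pow_iff {n k : ℕ} (hn : Odd n) (hk : k ≠ 0) :
    IsSquare (-1 : ZMod (n ^ k)) ↔ IsSquare (-1 : ZMod n) := by
  refine ⟨ZMod.isSquare_neg_one_of_dvd (dvd_pow_self n hk), fun h ↦ ?_⟩
  obtain ⟨j, rfl⟩ := Nat.exists_eq_succ_of_ne_zero hk
  obtain ⟨a, ha⟩ := isSquare_neg_one_zmod_iff_exists_dvd_sq_add_one.mp h
  refine isSquare_neg_one_zmod_iff_exists_dvd_sq_add_one.mpr ⟨a ^ n ^ j, ?_⟩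
  have hlift : (n : ℤ) ^ (j + 1) ∣ (a ^ 2) ^ n ^ j - (-1) ^ n ^ j :=
    dvd_sub_pow_of_dvd_sub (by rwa [sub_neg_eq_add]) j
  rwa [hn.pow.neg_one_pow, sub_neg_eq_add, pow_right_comm, ← Nat.cast_pow] at hlift

theorem statement8_general {n k : ℕ} (hn : Odd n) (hk : k ≠ 0) {θ : ℤ}
    (hθ : IsCoprime (n : ℤ) θ) :
    (∃ f : ZMod (n ^ k) ≃+ ZMod (n ^ k), ∀ x, q8 n k θ (f x) = -q8 n k θ x) ↔
      IsSquare (-1 : ZMod n) := by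
  have : NeZero n := ⟨hn.pos.ne'⟩
  simp only [q8_eq_neg_iff hθ]
  rw [exists_addEquiv_sq_add_sq_eq_zero_iff, isSquare_neg_one_zmod_pow_iff hn hk]

/-- for an odd prime `p`, `k ≥ 1` and `p ∤ θ`, the form `q(a) = 2θa²/p^k` on
`ℤ/p^kℤ` admits an anti-automorphism if and only if `p ≡ 1 (mod 4)`. -/
theorem statement8 (p k : ℕ) (hp : p.Prime) (hodd : Odd p) (hk : 0 < k)
    (θ : ℤ) (hθ : ¬ (p : ℤ) ∣ θ) :
    (∃ f : ZMod (p ^ k) ≃+ ZMod (p ^ k),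
        ∀ x : ZMod (p ^ k), q8 p k θ (f x) = - q8 p k θ x) ↔ p % 4 = 1 := by
  have : Fact p.Prime := ⟨hp⟩
  have hθ_coprime := (Nat.prime_iff_prime_int.mp hp).coprime_iff_not_dvd.mpr hθ
  rw [statement8_general hodd hk.ne' hθ_coprime, ZMod.exists_sq_eq_neg_one_iff]
  grind
end

section
/- Let p be an odd prime, k₁, k₂ positive integers, and θ₁, θ₂ integers not divisible by p. Define q : (ℤ/p^{k₁}ℤ) × (ℤ/p^{k₂}ℤ) → ℚ/2ℤ by q(ā₁, ā₂) = 2θ₁a₁²/p^{k₁} + 2θ₂a₂²/p^{k₂} mod 2ℤ, on representatives a₁, a₂ (this is well defined). Then there exists a group automorphism f of (ℤ/p^{k₁}ℤ) × (ℤ/p^{k₂}ℤ) with q(f(x)) = −q(x) for all x if and only if p ≡ 1 (mod 4), or p ≡ 3 (mod 4) and k₁ = k₂. -/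
/-- The discriminant form `q(a₁,a₂) = 2θ₁a₁²/p^k₁ + 2θ₂a₂²/p^k₂ mod 2ℤ`. -/
noncomputable def q9 (p k₁ k₂ : ℕ) (θ₁ θ₂ : ℤ)
    (a : ZMod (p ^ k₁) × ZMod (p ^ k₂)) : QModTwo :=
  toQ2 (2 * (θ₁ : ℚ) * (a.1.val : ℚ) ^ 2 / (p : ℚ) ^ k₁ +
    2 * (θ₂ : ℚ) * (a.2.val : ℚ) ^ 2 / (p : ℚ) ^ k₂)

/-!
Multiplication by an element of norm `-1` is an anti-automorphism of a norm form. For `k₁ = k₂` the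
form is `θ₁` times the norm form of a quadratic algebra over `ℤ/p^k`, and `-1` is a norm from it:
over `𝔽_p` by counting squares, hence over `ℤ/p^k` by Hensel lifting. If `-1` is a square mod `p`,
then by Hensel lifting it is a square mod `p^k₁` and mod `p^k₂`, and its square roots act on the two
summands separately. Conversely, let `k₁ < k₂` and let `f (0, 1) = (a, b)`. Multiplying
`q(a, b) = -q(0, 1)` by `p^(k₂-1)` kills the first summand and leaves `θ₂ b² ≡ -θ₂ (mod p)`, so that
`-1` is a square mod `p`.
-/

section AntiAutomorphism

/-- A map `q : A → B` has an anti-automorphism if some additive automorphism of `A` changes the sign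
of `q`. -/
def HasAntiAutomorphism {A B : Type*} [Add A] [Neg B] (q : A → B) : Prop :=
  ∃ f : A ≃+ A, ∀ x, q (f x) = -q x

namespace HasAntiAutomorphism

theorem comp_addEquiv {A A' B : Type*} [Add A] [Add A'] [Neg B] {q : A → B}
    (hq : HasAntiAutomorphism q) (e : A' ≃+ A) : HasAntiAutomorphism fun x => q (e x) := by
  obtain ⟨f, hf⟩ := hq
  exact ⟨(e.trans f).trans e.symm, fun x => by simp [hf]⟩

theorem addMonoidHom_comp {A B C : Type*} [Add A] [AddGroup B] [AddGroup C] {q : A → B}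
    (hq : HasAntiAutomorphism q) (φ : B →+ C) : HasAntiAutomorphism fun x => φ (q x) := by
  obtain ⟨f, hf⟩ := hq
  exact ⟨f, fun x => by simp only [hf, map_neg]⟩

theorem prod_add {A₁ A₂ B : Type*} [AddZeroClass A₁] [AddZeroClass A₂] [AddCommGroup B]
    {q₁ : A₁ → B} {q₂ : A₂ → B} (hq₁ : HasAntiAutomorphism q₁) (hq₂ : HasAntiAutomorphism q₂) :
    HasAntiAutomorphism fun x : A₁ × A₂ => q₁ x.1 + q₂ x.2 := by
  obtain ⟨f₁, hf₁⟩ := hq₁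
  obtain ⟨f₂, hf₂⟩ := hq₂
  exact ⟨f₁.prodCongr f₂, fun x =>
    (congrArg₂ (· + ·) (hf₁ x.1) (hf₂ x.2)).trans (neg_add _ _).symm⟩

theorem of_map_eq_neg_one {S T : Type*} [Semiring S] [Monoid T] [HasDistribNeg T] (N : S →* T)
    {u : S} (hu : IsUnit u) (hN : N u = -1) : HasAntiAutomorphism N := by
  obtain ⟨u, rfl⟩ := hu
  exact ⟨AddAut.mulLeft u, fun x => by simp [Units.smul_def, hN]⟩

theorem sq_of_isSquare_neg_one {R : Type*} [CommRing R] (h : IsSquare (-1 : R)) :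
    HasAntiAutomorphism fun x : R => x ^ 2 := by
  obtain ⟨u, hu⟩ := h
  have unit_u : IsUnit u := isUnit_of_mul_isUnit_left (hu ▸ isUnit_one.neg)
  exact of_map_eq_neg_one (powMonoidHom 2) unit_u (by simp [sq, ← hu])

theorem sq_add_mul_sq_of_exists_eq_neg_one {R : Type*} [CommRing R] {c : R}
    (h : ∃ a b : R, a ^ 2 + c * b ^ 2 = -1) :
    HasAntiAutomorphism fun x : R × R => x.1 ^ 2 + c * x.2 ^ 2 := by
  obtain ⟨a, b, hab⟩ := h
  have norm_eq (z : QuadraticAlgebra R (-c) 0) : z.norm = z.re ^ 2 + c * z.im ^ 2 := by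
    rw [QuadraticAlgebra.norm_def]
    ring
  have norm_u : (⟨a, b⟩ : QuadraticAlgebra R (-c) 0).norm = -1 := by rw [norm_eq, hab]
  have unit_u := QuadraticAlgebra.isUnit_iff_norm_isUnit.mpr (norm_u ▸ isUnit_one.neg)
  let e : R × R ≃+ QuadraticAlgebra R (-c) 0 :=
    { (QuadraticAlgebra.equivProd (-c) 0).symm with map_add' := fun _ _ => rfl }
  have anti_norm := of_map_eq_neg_one QuadraticAlgebra.norm unit_u norm_u
  simpa only [norm_eq] using! anti_norm.comp_addEquiv e

end HasAntiAutomorphism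

end AntiAutomorphism

theorem exists_sq_add_mul_sq_eq {F : Type*} [Field F] [Finite F] {c : F} (hc : c ≠ 0) (t : F) :
    ∃ a b : F, a ^ 2 + c * b ^ 2 = t := by
  have := Fintype.ofFinite F
  by_cases hF : ringChar F = 2
  · obtain ⟨a, ha⟩ := FiniteField.isSquare_of_char_two hF t
    exact ⟨a, 0, by simp [ha, sq]⟩
  · open Polynomial in
    obtain ⟨a, b, hab⟩ := FiniteField.exists_root_sum_quadratic
      (f := C (1 : F) * X ^ 2 + C 0 * X + C 0) (g := C c * X ^ 2 + C 0 * X + C (-t))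
      (degree_quadratic one_ne_zero) (degree_quadratic hc)
      (FiniteField.odd_card_of_char_ne_two hF)
    simp only [eval_add, eval_mul, eval_C, eval_pow, eval_X] at hab
    exact ⟨a, b, by linear_combination hab⟩

section NilpotentLifting

variable {R S : Type*} [CommRing R] [CommRing S] {φ : R →+* S}

theorem isLocalHom_of_ker_le_nilradical (hφ : Function.Surjective φ)
    (hker : RingHom.ker φ ≤ nilradical R) : IsLocalHom φ where
  map_nonunit x hx := by
    obtain ⟨y, hy⟩ := hφ ↑hx.unit⁻¹
    have nilpotent : IsNilpotent (x * y - 1) :=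
      hker (by simp [RingHom.mem_ker, hy])
    have : IsUnit (x * y) := by simpa using nilpotent.isUnit_add_one
    exact isUnit_of_mul_isUnit_left this

theorem isSquare_of_isSquare_map (hφ : Function.Surjective φ)
    (hker : RingHom.ker φ ≤ nilradical R) (h2 : IsUnit (2 : R)) {c : R} (hc : IsUnit c)
    (h : IsSquare (φ c)) : IsSquare c := by
  have := isLocalHom_of_ker_le_nilradical hφ hker
  obtain ⟨y, hy⟩ := h
  obtain ⟨x, rfl⟩ := hφ y
  have unit_x : IsUnit x :=
    isUnit_of_map_unit φ x (isUnit_of_mul_isUnit_left (hy ▸ hc.map φ))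
  open Polynomial in
  obtain ⟨r, ⟨-, hr⟩, -⟩ := existsUnique_nilpotent_sub_and_aeval_eq_zero
    (P := X ^ 2 - C c) (x := x)
    (hker (by simp [RingHom.mem_ker, hy, sq]))
    (by simpa [one_add_one_eq_two] using h2.mul unit_x)
  exact ⟨r, by simpa [sub_eq_zero, sq, eq_comm] using hr⟩

theorem exists_sq_add_mul_sq_eq_of_isUnit {F : Type*} [Field F] [Finite F] {φ : R →+* F}
    (hφ : Function.Surjective φ) (hker : RingHom.ker φ ≤ nilradical R) (h2 : IsUnit (2 : R))
    {c t : R} (hc : IsUnit c) (ht : IsUnit t) : ∃ a b : R, a ^ 2 + c * b ^ 2 = t := by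
  have := isLocalHom_of_ker_le_nilradical hφ hker
  obtain ⟨a₀, b₀, h₀⟩ := exists_sq_add_mul_sq_eq (hc.map φ).ne_zero (φ t)
  by_cases ha₀ : a₀ = 0
  · obtain ⟨d, hd⟩ := hc.exists_right_inv
    have map_eq : φ (d * t) = b₀ * b₀ := by
      have hφd : φ c * φ d = 1 := by rw [← map_mul, hd, map_one]
      rw [map_mul, ← h₀, ha₀]
      linear_combination b₀ ^ 2 * hφd
    obtain ⟨b, hb⟩ := isSquare_of_isSquare_map hφ hker h2
      ((IsUnit.of_mul_eq_one_right c hd).mul ht) ⟨b₀, map_eq⟩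
    exact ⟨0, b, by linear_combination t * hd - c * hb⟩
  · obtain ⟨b, rfl⟩ := hφ b₀
    have map_eq : φ (t - c * b ^ 2) = a₀ * a₀ := by
      rw [map_sub, map_mul, map_pow, ← h₀]
      ring
    have unit : IsUnit (t - c * b ^ 2) :=
      isUnit_of_map_unit φ _ (map_eq ▸ (mul_self_ne_zero.mpr ha₀).isUnit)
    obtain ⟨a, ha⟩ := isSquare_of_isSquare_map hφ hker h2 unit ⟨a₀, map_eq⟩
    exact ⟨a, b, by linear_combination -ha⟩

end NilpotentLifting

section ZModPrimePower

theorem ker_castHom_pow_le_nilradical (p : ℕ) {k : ℕ} (hk : k ≠ 0) :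
    RingHom.ker (ZMod.castHom (dvd_pow_self p hk) (ZMod p)) ≤ nilradical (ZMod (p ^ k)) := by
  intro x hx
  obtain ⟨n, rfl⟩ := ZMod.intCast_surjective x
  rw [RingHom.mem_ker, map_intCast, ZMod.intCast_zmod_eq_zero_iff_dvd] at hx
  refine ⟨k, ?_⟩
  rw [← Int.cast_pow, Ideal.zero_eq_bot, Ideal.mem_bot, ZMod.intCast_zmod_eq_zero_iff_dvd,
    Nat.cast_pow]
  exact pow_dvd_pow_of_dvd hx k

theorem castHom_eq_zero_of_pow_mul_eq_zero {p k : ℕ} [NeZero p] {c : ZMod (p ^ (k + 1))}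
    (h : (p : ZMod (p ^ (k + 1))) ^ k * c = 0) :
    ZMod.castHom (dvd_pow_self p k.succ_ne_zero) (ZMod p) c = 0 := by
  obtain ⟨n, rfl⟩ := ZMod.intCast_surjective c
  have hdvd : (p : ℤ) ^ k * p ∣ p ^ k * n := by
    rw [← pow_succ]
    exact_mod_cast (ZMod.intCast_zmod_eq_zero_iff_dvd (p ^ k * n) (p ^ (k + 1))).mp
      (by exact_mod_cast h)
  rw [map_intCast, ZMod.intCast_zmod_eq_zero_iff_dvd]
  exact Int.dvd_of_mul_dvd_mul_left (pow_ne_zero k (NeZero.ne _)) hdvd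

theorem isUnit_two_zmod_pow {p : ℕ} (hodd : Odd p) (k : ℕ) : IsUnit (2 : ZMod (p ^ k)) :=
  (ZMod.isUnit_iff_coprime 2 _).mpr (Nat.coprime_two_left.mpr hodd.pow)

theorem isUnit_intCast_zmod_pow {p : ℕ} (hp : p.Prime) {θ : ℤ} (hθ : ¬ (p : ℤ) ∣ θ) (k : ℕ) :
    IsUnit (θ : ZMod (p ^ k)) := by
  rw [ZMod.coe_int_isUnit_iff_isCoprime, Nat.cast_pow]
  exact ((Nat.prime_iff_prime_int.mp hp).coprime_iff_not_dvd.mpr hθ).pow_left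

theorem isSquare_neg_one_zmod_pow {p : ℕ} (hodd : Odd p) {k : ℕ} (hk : k ≠ 0)
    (h : IsSquare (-1 : ZMod p)) : IsSquare (-1 : ZMod (p ^ k)) :=
  isSquare_of_isSquare_map (ZMod.castHom_surjective _) (ker_castHom_pow_le_nilradical p hk)
    (isUnit_two_zmod_pow hodd k) isUnit_one.neg
    (by rwa [map_neg, map_one])

end ZModPrimePower

section DiscriminantForm

/-- The homomorphism `ℤ/N → ℚ/2ℤ`, `n ↦ 2n/N`, whose values on `θ₁ * a₁ ^ 2` and
`θ₂ * a₂ ^ 2` are the two terms of `q9`; it is zero for `N = 0`. -/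
noncomputable def twoMulDiv (N : ℕ) : ZMod N →+ QModTwo :=
  ZMod.lift N ⟨toQ2.comp ((AddMonoidHom.mulLeft (2 / N : ℚ)).comp (Int.castAddHom ℚ)), by
    rcases eq_or_ne (N : ℚ) 0 with hN | hN
    · simp [hN]
    · simp [hN, toQ2, QuotientAddGroup.eq_zero_iff]⟩

theorem twoMulDiv_intCast (N : ℕ) (n : ℤ) : twoMulDiv N n = toQ2 (2 * n / N) := by
  simp [twoMulDiv, div_mul_eq_mul_div]

theorem twoMulDiv_injective (N : ℕ) [NeZero N] : Function.Injective (twoMulDiv N) := by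
  have hN : (N : ℚ) ≠ 0 := NeZero.ne _
  rw [injective_iff_map_eq_zero]
  intro x hx
  obtain ⟨n, rfl⟩ := ZMod.intCast_surjective x
  rw [twoMulDiv_intCast, toQ2, QuotientAddGroup.mk'_apply, QuotientAddGroup.eq_zero_iff,
    AddSubgroup.mem_zmultiples_iff] at hx
  obtain ⟨m, hm⟩ := hx
  rw [zsmul_eq_mul, eq_div_iff hN] at hm
  rw [ZMod.intCast_zmod_eq_zero_iff_dvd]
  refine ⟨m, ?_⟩
  have : (n : ℚ) = N * m := by linear_combination -hm / 2
  exact_mod_cast this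

variable {p k₁ k₂ : ℕ} {θ₁ θ₂ : ℤ}

theorem q9_eq_twoMulDiv_add [NeZero p] (x : ZMod (p ^ k₁) × ZMod (p ^ k₂)) :
    q9 p k₁ k₂ θ₁ θ₂ x =
      twoMulDiv (p ^ k₁) (θ₁ * x.1 ^ 2) + twoMulDiv (p ^ k₂) (θ₂ * x.2 ^ 2) := by
  have twoMulDiv_val (k : ℕ) (θ : ℤ) (y : ZMod (p ^ k)) :
      twoMulDiv (p ^ k) (θ * y ^ 2) = toQ2 (2 * θ * y.val ^ 2 / p ^ k) := by
    have := twoMulDiv_intCast (p ^ k) (θ * y.val ^ 2)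
    push_cast [ZMod.natCast_zmod_val] at this
    rw [this, mul_assoc]
  rw [q9, map_add, twoMulDiv_val, twoMulDiv_val]

theorem HasAntiAutomorphism.q9_swap [NeZero p]
    (h : HasAntiAutomorphism (q9 p k₁ k₂ θ₁ θ₂)) : HasAntiAutomorphism (q9 p k₂ k₁ θ₂ θ₁) := by
  have swap_eq : (fun x => q9 p k₁ k₂ θ₁ θ₂ (AddEquiv.prodComm x)) = q9 p k₂ k₁ θ₂ θ₁ := by
    funext x
    rw [q9_eq_twoMulDiv_add, q9_eq_twoMulDiv_add, add_comm]
    rfl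
  exact swap_eq ▸ h.comp_addEquiv AddEquiv.prodComm

theorem isSquare_neg_one_of_hasAntiAutomorphism_q9 [NeZero p] (hθ₂ : IsUnit (θ₂ : ZMod p))
    (hlt : k₁ < k₂) (h : HasAntiAutomorphism (q9 p k₁ k₂ θ₁ θ₂)) : IsSquare (-1 : ZMod p) := by
  obtain ⟨f, hf⟩ := h
  obtain ⟨k, rfl⟩ := Nat.exists_eq_succ_of_ne_zero (Nat.ne_zero_of_lt hlt)
  obtain ⟨⟨a, b⟩, hab⟩ : ∃ x, f (0, 1) = x := ⟨_, rfl⟩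
  have sum_eq_zero :
      twoMulDiv (p ^ k₁) (θ₁ * a ^ 2) + twoMulDiv (p ^ (k + 1)) (θ₂ * (b ^ 2 + 1)) = 0 := by
    have := hf (0, 1)
    rw [hab, q9_eq_twoMulDiv_add, q9_eq_twoMulDiv_add, eq_neg_iff_add_eq_zero] at this
    simpa [mul_add, add_assoc] using this
  have pow_eq_zero : (p : ZMod (p ^ k₁)) ^ k = 0 := by
    rw [← Nat.cast_pow, ZMod.natCast_eq_zero_iff]
    exact pow_dvd_pow p (Nat.lt_succ_iff.mp hlt)
  have pow_mul_eq_zero : (p : ZMod (p ^ (k + 1))) ^ k * (θ₂ * (b ^ 2 + 1)) = 0 := by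
    apply (injective_iff_map_eq_zero _).mp (twoMulDiv_injective (p ^ (k + 1)))
    have := congrArg (p ^ k • ·) sum_eq_zero
    simpa [smul_add, ← map_nsmul, pow_eq_zero] using this
  have sq_eq := castHom_eq_zero_of_pow_mul_eq_zero pow_mul_eq_zero
  rw [map_mul, map_intCast, hθ₂.mul_right_eq_zero, map_add, map_pow, map_one] at sq_eq
  exact ⟨_, by linear_combination -sq_eq⟩

theorem hasAntiAutomorphism_q9_of_isSquare_neg_one (hodd : Odd p) (hk₁ : k₁ ≠ 0) (hk₂ : k₂ ≠ 0)
    (h : IsSquare (-1 : ZMod p)) : HasAntiAutomorphism (q9 p k₁ k₂ θ₁ θ₂) := by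
  have : NeZero p := ⟨hodd.pos.ne'⟩
  have summand {k : ℕ} (hk : k ≠ 0) (θ : ℤ) :
      HasAntiAutomorphism fun x : ZMod (p ^ k) => twoMulDiv (p ^ k) (θ * x ^ 2) :=
    HasAntiAutomorphism.addMonoidHom_comp
      (.sq_of_isSquare_neg_one (isSquare_neg_one_zmod_pow hodd hk h))
      ((twoMulDiv _).comp (AddMonoidHom.mulLeft _))
  simpa only [← q9_eq_twoMulDiv_add] using (summand hk₁ θ₁).prod_add (summand hk₂ θ₂)

theorem hasAntiAutomorphism_q9_self {k : ℕ} (hp : p.Prime) (hodd : Odd p) (hk : k ≠ 0)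
    (hθ₁ : ¬ (p : ℤ) ∣ θ₁) (hθ₂ : ¬ (p : ℤ) ∣ θ₂) :
    HasAntiAutomorphism (q9 p k k θ₁ θ₂) := by
  have : Fact p.Prime := ⟨hp⟩
  have unit₁ := isUnit_intCast_zmod_pow hp hθ₁ k
  have unit₂ := isUnit_intCast_zmod_pow hp hθ₂ k
  obtain ⟨c, hc⟩ : (θ₁ : ZMod (p ^ k)) ∣ θ₂ := unit₁.dvd
  have neg_one_norm : ∃ a b : ZMod (p ^ k), a ^ 2 + c * b ^ 2 = -1 :=
    exists_sq_add_mul_sq_eq_of_isUnit (ZMod.castHom_surjective _)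
      (ker_castHom_pow_le_nilradical p hk) (isUnit_two_zmod_pow hodd k)
      (isUnit_of_mul_isUnit_right (hc ▸ unit₂)) isUnit_one.neg
  have q9_eq (x : ZMod (p ^ k) × ZMod (p ^ k)) :
      twoMulDiv (p ^ k) (θ₁ * (x.1 ^ 2 + c * x.2 ^ 2)) = q9 p k k θ₁ θ₂ x := by
    rw [q9_eq_twoMulDiv_add, ← map_add, hc, mul_add, mul_assoc]
  have anti_norm := HasAntiAutomorphism.sq_add_mul_sq_of_exists_eq_neg_one neg_one_norm
  simpa [q9_eq] using anti_norm.addMonoidHom_comp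
    ((twoMulDiv (p ^ k)).comp (AddMonoidHom.mulLeft (θ₁ : ZMod (p ^ k))))

theorem hasAntiAutomorphism_q9_iff (hp : p.Prime) (hodd : Odd p) (hk₁ : k₁ ≠ 0) (hk₂ : k₂ ≠ 0)
    (hθ₁ : ¬ (p : ℤ) ∣ θ₁) (hθ₂ : ¬ (p : ℤ) ∣ θ₂) :
    HasAntiAutomorphism (q9 p k₁ k₂ θ₁ θ₂) ↔ IsSquare (-1 : ZMod p) ∨ k₁ = k₂ := by
  have : NeZero p := ⟨hp.ne_zero⟩
  have unit {θ : ℤ} (hθ : ¬ (p : ℤ) ∣ θ) : IsUnit (θ : ZMod p) :=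
    pow_one p ▸ isUnit_intCast_zmod_pow hp hθ 1
  constructor
  · intro h
    rcases lt_trichotomy k₁ k₂ with hlt | heq | hgt
    · exact .inl (isSquare_neg_one_of_hasAntiAutomorphism_q9 (unit hθ₂) hlt h)
    · exact .inr heq
    · exact .inl (isSquare_neg_one_of_hasAntiAutomorphism_q9 (unit hθ₁) hgt h.q9_swap)
  · rintro (h | rfl)
    · exact hasAntiAutomorphism_q9_of_isSquare_neg_one hodd hk₁ hk₂ h
    · exact hasAntiAutomorphism_q9_self hp hodd hk₁ hθ₁ hθ₂

end DiscriminantForm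

/-- for an odd prime `p`, `k₁, k₂ ≥ 1` and `p ∤ θ₁θ₂`, the form
`q(a₁,a₂) = 2θ₁a₁²/p^k₁ + 2θ₂a₂²/p^k₂` on `(ℤ/p^k₁ℤ) × (ℤ/p^k₂ℤ)` admits an
anti-automorphism iff `p ≡ 1 (mod 4)`, or `p ≡ 3 (mod 4)` and `k₁ = k₂`. -/
theorem statement9 (p k₁ k₂ : ℕ) (hp : p.Prime) (hodd : Odd p)
    (hk₁ : 0 < k₁) (hk₂ : 0 < k₂)
    (θ₁ θ₂ : ℤ) (hθ₁ : ¬ (p : ℤ) ∣ θ₁) (hθ₂ : ¬ (p : ℤ) ∣ θ₂) :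
    (∃ f : (ZMod (p ^ k₁) × ZMod (p ^ k₂)) ≃+ (ZMod (p ^ k₁) × ZMod (p ^ k₂)),
        ∀ x, q9 p k₁ k₂ θ₁ θ₂ (f x) = - q9 p k₁ k₂ θ₁ θ₂ x) ↔
      (p % 4 = 1 ∨ (p % 4 = 3 ∧ k₁ = k₂)) := by
  have : Fact p.Prime := ⟨hp⟩
  have mod_four : p % 4 = 1 ∨ p % 4 = 3 := Nat.odd_mod_four_iff.mp (Nat.odd_iff.mp hodd)
  have h := hasAntiAutomorphism_q9_iff hp hodd hk₁.ne' hk₂.ne' hθ₁ hθ₂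
  rw [ZMod.exists_sq_eq_neg_one_iff] at h
  exact h.trans (by lia)
end

section
/- Let k be a positive integer and θ₁, θ₂ odd integers. Define q : (ℤ/2^kℤ) × (ℤ/2^kℤ) → ℚ/2ℤ by q(ā₁, ā₂) = θ₁a₁²/2^k + θ₂a₂²/2^k mod 2ℤ, on representatives a₁, a₂ (this is well defined). Then there exists a group automorphism f of (ℤ/2^kℤ) × (ℤ/2^kℤ) with q(f(x)) = −q(x) for all x if and only if θ₁ + θ₂ ≡ 0 (mod 4). -/
/-- The discriminant form `q(a₁,a₂) = θ₁a₁²/2^k + θ₂a₂²/2^k mod 2ℤ`. -/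
noncomputable def q11 (k : ℕ) (θ₁ θ₂ : ℤ) (a : ZMod (2 ^ k) × ZMod (2 ^ k)) : QModTwo :=
  toQ2 ((θ₁ : ℚ) * (a.1.val : ℚ) ^ 2 / (2 : ℚ) ^ k + (θ₂ : ℚ) * (a.2.val : ℚ) ^ 2 / (2 : ℚ) ^ k)

/-!
If `(x, y)` represents `-q(1, 0)`, then `θ₁ (x² + 1) + θ₂ y² ≡ 0 (mod 4)`, which for odd `θ₁, θ₂`
forces `x` even and `y` odd.

Conversely, put `D = θ₁ θ₂`. Up to the factor `θ₁`, the form `θ₁ x² + θ₂ y²` is the norm of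
`θ₁ x + y √-D`, so multiplication by `a + c √-D` scales it by `a² + D c²`. When `4 ∣ θ₁ + θ₂` we
have `D ≡ 3` or `7 (mod 8)`, and `-1` is of the form `a² + D c²` modulo every power of `2`: take
`a = 2` or `a = 0` respectively and solve for `c`, since `D c² ≡ t` is solvable as soon as
`t ≡ D (mod 8)`.
-/

theorem toQ2_div_eq_toQ2_div_iff {d : ℤ} (hd : d ≠ 0) (m n : ℤ) :
    toQ2 ((m : ℚ) / d) = toQ2 ((n : ℚ) / d) ↔ m ≡ n [ZMOD 2 * d] := by
  have hd' : (d : ℚ) ≠ 0 := Int.cast_ne_zero.mpr hd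
  calc toQ2 ((m : ℚ) / d) = toQ2 ((n : ℚ) / d)
      ↔ (m : ℚ) / d ≡ (n : ℚ) / d [PMOD 2] := AddCommGroup.modEq_iff_eq_mod_zmultiples.symm
    _ ↔ (m : ℚ) ≡ n [PMOD 2 * (d : ℚ)] := AddCommGroup.div_modEq_div hd'
    _ ↔ m ≡ n [ZMOD 2 * d] := by
      rw [← AddCommGroup.modEq_iff_intModEq]
      exact_mod_cast AddCommGroup.intCast_modEq_intCast (G := ℚ) (z := 2 * d)

theorem sq_modEq_sq_of_even {m x y : ℤ} (hm : Even m) (h : x ≡ y [ZMOD m]) :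
    x ^ 2 ≡ y ^ 2 [ZMOD 2 * m] := by
  have hsub : m ∣ y - x := h.dvd
  have hadd : 2 ∣ y + x := by
    rw [show y + x = (y - x) + 2 * x by ring]
    exact (hm.two_dvd.trans hsub).add (dvd_mul_right 2 x)
  rw [Int.modEq_iff_dvd, sq_sub_sq]
  exact mul_dvd_mul hadd hsub

theorem q11_intCast {k : ℕ} (hk : 0 < k) (θ₁ θ₂ x y : ℤ) :
    q11 k θ₁ θ₂ ((x : ZMod (2 ^ k)), (y : ZMod (2 ^ k))) =
      toQ2 (((θ₁ * x ^ 2 + θ₂ * y ^ 2 : ℤ) : ℚ) / (2 ^ k : ℤ)) := by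
  have val_sq (z : ℤ) : ((z : ZMod (2 ^ k)).val : ℤ) ^ 2 ≡ z ^ 2 [ZMOD 2 * 2 ^ k] := by
    refine sq_modEq_sq_of_even (even_two.pow_of_ne_zero hk.ne') ?_
    rw [ZMod.val_intCast]
    exact_mod_cast Int.mod_modEq z (2 ^ k)
  rw [← (toQ2_div_eq_toQ2_div_iff (by positivity) _ _).mpr
    (((val_sq x).mul_left θ₁).add ((val_sq y).mul_left θ₂)), q11]
  push_cast
  rw [add_div]

theorem q11_intCast_eq_neg_iff {k : ℕ} (hk : 0 < k) (θ₁ θ₂ x y z w : ℤ) :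
    q11 k θ₁ θ₂ ((x : ZMod (2 ^ k)), (y : ZMod (2 ^ k))) =
        -q11 k θ₁ θ₂ ((z : ZMod (2 ^ k)), (w : ZMod (2 ^ k))) ↔
      θ₁ * x ^ 2 + θ₂ * y ^ 2 ≡ -(θ₁ * z ^ 2 + θ₂ * w ^ 2) [ZMOD 2 ^ (k + 1)] := by
  rw [q11_intCast hk, q11_intCast hk, ← map_neg, ← neg_div, ← Int.cast_neg,
    toQ2_div_eq_toQ2_div_iff (by positivity), pow_succ' 2 k]

theorem four_dvd_add_of_modEq_neg {θ₁ θ₂ x y : ℤ} (hθ₁ : Odd θ₁) (hθ₂ : Odd θ₂)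
    (h : θ₁ * x ^ 2 + θ₂ * y ^ 2 ≡ -θ₁ [ZMOD 4]) : 4 ∣ θ₁ + θ₂ := by
  have sq_mod_four (z : ℤ) : z ^ 2 ≡ 0 [ZMOD 4] ∨ z ^ 2 ≡ 1 [ZMOD 4] :=
    z.even_or_odd.imp (fun hz ↦ Int.modEq_zero_iff_dvd.mpr (pow_dvd_pow_of_dvd hz.two_dvd 2))
      Int.sq_mod_four_eq_one_of_odd
  have reduce {i j : ℤ} (hx : x ^ 2 ≡ i [ZMOD 4]) (hy : y ^ 2 ≡ j [ZMOD 4]) :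
      θ₁ * i + θ₂ * j ≡ -θ₁ [ZMOD 4] :=
    ((hx.mul_left θ₁).add (hy.mul_left θ₂)).symm.trans h
  rw [Int.odd_iff] at hθ₁ hθ₂
  rcases sq_mod_four x with hx | hx <;> rcases sq_mod_four y with hy | hy <;>
  · have := reduce hx hy
    rw [Int.ModEq] at this
    omega

theorem four_dvd_add_of_q11_eq_neg {k : ℕ} (hk : 0 < k) {θ₁ θ₂ : ℤ} (hθ₁ : Odd θ₁) (hθ₂ : Odd θ₂)
    {p : ZMod (2 ^ k) × ZMod (2 ^ k)} (hp : q11 k θ₁ θ₂ p = -q11 k θ₁ θ₂ (1, 0)) :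
    4 ∣ θ₁ + θ₂ := by
  obtain ⟨x, hx⟩ := ZMod.intCast_surjective p.1
  obtain ⟨y, hy⟩ := ZMod.intCast_surjective p.2
  have hxy : θ₁ * x ^ 2 + θ₂ * y ^ 2 ≡ -(θ₁ * 1 ^ 2 + θ₂ * 0 ^ 2) [ZMOD 2 ^ (k + 1)] := by
    rw [← q11_intCast_eq_neg_iff hk, hx, hy]
    exact_mod_cast hp
  have four_dvd : (4 : ℤ) ∣ 2 ^ (k + 1) := pow_dvd_pow 2 (Nat.succ_le_succ hk)
  refine four_dvd_add_of_modEq_neg hθ₁ hθ₂ (x := x) (y := y) ?_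
  simpa using hxy.of_dvd four_dvd

theorem exists_odd_mul_sq_modEq {D t : ℤ} (hD : Odd D) (ht : D ≡ t [ZMOD 8]) (n : ℕ) :
    ∃ c : ℤ, Odd c ∧ D * c ^ 2 ≡ t [ZMOD 2 ^ (n + 3)] := by
  induction n with
  | zero => exact ⟨1, odd_one, by simpa using ht⟩
  | succ n ih =>
    obtain ⟨c, hc, hcn⟩ := ih
    obtain ⟨e, he⟩ := hcn.symm.dvd
    rcases e.even_or_odd with ⟨g, rfl⟩ | he_odd
    · exact ⟨c, hc, (Int.modEq_iff_dvd.mpr ⟨g, by rw [he]; ring⟩).symm⟩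
    · -- Replacing `c` by `c + 2 ^ (n + 2)` adds the odd number `D * c` to the quotient `e`.
      obtain ⟨g, hg⟩ : Even (e + D * c) := he_odd.add_odd (hD.mul hc)
      have shift_even : Even ((2 : ℤ) ^ (n + 2)) := even_two.pow_of_ne_zero (by omega)
      refine ⟨c + 2 ^ (n + 2), hc.add_even shift_even,
        (Int.modEq_iff_dvd.mpr ⟨g + D * 2 ^ n, ?_⟩).symm⟩
      linear_combination he + 2 ^ (n + 3) * hg

theorem exists_sq_add_mul_sq_modEq_neg_one {D : ℤ} (hD : D ≡ -1 [ZMOD 4]) (n : ℕ) :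
    ∃ a c : ℤ, a ^ 2 + D * c ^ 2 ≡ -1 [ZMOD 2 ^ n] := by
  have hD_odd : Odd D := by rw [Int.ModEq] at hD; grind
  have solve_for_c (a : ℤ) (ha : D ≡ -1 - a ^ 2 [ZMOD 8]) :
      ∃ a c : ℤ, a ^ 2 + D * c ^ 2 ≡ -1 [ZMOD 2 ^ n] := by
    obtain ⟨c, -, hc⟩ := exists_odd_mul_sq_modEq hD_odd ha n
    refine ⟨a, c, ?_⟩
    calc a ^ 2 + D * c ^ 2 ≡ a ^ 2 + (-1 - a ^ 2) [ZMOD 2 ^ n] :=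
          (hc.of_dvd (pow_dvd_pow 2 (Nat.le_add_right n 3))).add_left (a ^ 2)
      _ = -1 := by ring
  obtain h7 | h3 : D ≡ -1 - 0 ^ 2 [ZMOD 8] ∨ D ≡ -1 - 2 ^ 2 [ZMOD 8] := by
    simp only [Int.ModEq] at hD ⊢
    omega
  · exact solve_for_c 0 h7
  · exact solve_for_c 2 h3

theorem mul_modEq_neg_one_of_four_dvd_add {m n : ℤ} (hm : Odd m) (h : 4 ∣ m + n) :
    m * n ≡ -1 [ZMOD 4] := by
  have hn : n ≡ -m [ZMOD 4] :=
    Int.modEq_iff_dvd.mpr (by rwa [← dvd_neg, neg_sub, sub_neg_eq_add, add_comm])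
  have hm_sq : m ^ 2 ≡ 1 [ZMOD 4] := Int.sq_mod_four_eq_one_of_odd hm
  calc m * n ≡ m * -m [ZMOD 4] := hn.mul_left m
    _ = -m ^ 2 := by ring
    _ ≡ -1 [ZMOD 4] := hm_sq.neg

/-- Multiplication by `a + c √(-αβ)` on `R × R`, where `(x, y)` stands for `α x + y √(-αβ)`. It
scales the form `α x² + β y²` by the norm `a² + αβ c²` of the multiplier, and is invertible when
this norm is a unit `u`. -/
@[simps]
def diagonalFormSimilitude {R : Type*} [CommRing R] (α β a c : R) (u : Rˣ)
    (hu : a ^ 2 + α * β * c ^ 2 = u) : (R × R) ≃ₗ[R] (R × R) where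
  toFun p := (a * p.1 - β * c * p.2, α * c * p.1 + a * p.2)
  invFun p := (↑u⁻¹ * (a * p.1 + β * c * p.2), ↑u⁻¹ * (a * p.2 - α * c * p.1))
  map_add' p p' := by ext <;> simp only [Prod.fst_add, Prod.snd_add] <;> ring
  map_smul' r p := by
    ext <;> simp only [Prod.smul_fst, Prod.smul_snd, smul_eq_mul, RingHom.id_apply] <;> ring
  left_inv p := by
    ext
    · linear_combination ↑u⁻¹ * p.1 * hu + p.1 * u.inv_mul
    · linear_combination ↑u⁻¹ * p.2 * hu + p.2 * u.inv_mul
  right_inv p := by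
    ext
    · linear_combination ↑u⁻¹ * p.1 * hu + p.1 * u.inv_mul
    · linear_combination ↑u⁻¹ * p.2 * hu + p.2 * u.inv_mul

theorem exists_antiAutomorphism_q11 {k : ℕ} (hk : 0 < k) {θ₁ θ₂ : ℤ} (hθ₁ : Odd θ₁)
    (h : 4 ∣ θ₁ + θ₂) :
    ∃ f : (ZMod (2 ^ k) × ZMod (2 ^ k)) ≃+ (ZMod (2 ^ k) × ZMod (2 ^ k)),
      ∀ x, q11 k θ₁ θ₂ (f x) = -q11 k θ₁ θ₂ x := by
  obtain ⟨a, c, hac⟩ :=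
    exists_sq_add_mul_sq_modEq_neg_one (mul_modEq_neg_one_of_four_dvd_add hθ₁ h) (k + 1)
  have norm_eq :
      (a : ZMod (2 ^ k)) ^ 2 + θ₁ * θ₂ * c ^ 2 = ((-1 : (ZMod (2 ^ k))ˣ) : ZMod (2 ^ k)) := by
    have := (ZMod.intCast_eq_intCast_iff _ _ (2 ^ k)).mpr
      (by exact_mod_cast hac.of_dvd (pow_dvd_pow 2 k.le_succ))
    simpa using this
  refine ⟨(diagonalFormSimilitude (θ₁ : ZMod (2 ^ k)) θ₂ a c (-1) norm_eq).toAddEquiv, ?_⟩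
  rintro ⟨x, y⟩
  obtain ⟨x, rfl⟩ := ZMod.intCast_surjective x
  obtain ⟨y, rfl⟩ := ZMod.intCast_surjective y
  have scaled : θ₁ * (a * x - θ₂ * c * y) ^ 2 + θ₂ * (θ₁ * c * x + a * y) ^ 2 ≡
      -(θ₁ * x ^ 2 + θ₂ * y ^ 2) [ZMOD 2 ^ (k + 1)] := by
    calc θ₁ * (a * x - θ₂ * c * y) ^ 2 + θ₂ * (θ₁ * c * x + a * y) ^ 2
      _ = (a ^ 2 + θ₁ * θ₂ * c ^ 2) * (θ₁ * x ^ 2 + θ₂ * y ^ 2) := by ring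
      _ ≡ -1 * (θ₁ * x ^ 2 + θ₂ * y ^ 2) [ZMOD 2 ^ (k + 1)] := hac.mul_right _
      _ = -(θ₁ * x ^ 2 + θ₂ * y ^ 2) := neg_one_mul _
  simpa using (q11_intCast_eq_neg_iff hk θ₁ θ₂ _ _ x y).mpr scaled

/-- for `k ≥ 1` and odd `θ₁, θ₂`, the form
`q(a₁,a₂) = θ₁a₁²/2^k + θ₂a₂²/2^k` on `(ℤ/2^kℤ)²` admits an anti-automorphism
iff `θ₁ + θ₂ ≡ 0 (mod 4)`. -/
theorem statement11 (k : ℕ) (hk : 0 < k) (θ₁ θ₂ : ℤ) (hθ₁ : Odd θ₁) (hθ₂ : Odd θ₂) :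
    (∃ f : (ZMod (2 ^ k) × ZMod (2 ^ k)) ≃+ (ZMod (2 ^ k) × ZMod (2 ^ k)),
        ∀ x, q11 k θ₁ θ₂ (f x) = - q11 k θ₁ θ₂ x) ↔ (4 : ℤ) ∣ (θ₁ + θ₂) := by
  constructor
  · rintro ⟨f, hf⟩
    exact four_dvd_add_of_q11_eq_neg hk hθ₁ hθ₂ (hf (1, 0))
  · exact exists_antiAutomorphism_q11 hk hθ₁
end

section
/- Let k be a positive integer and θ an odd integer. Define q : (ℤ/2^kℤ) × (ℤ/2^kℤ) → ℚ/2ℤ by q(ā₁, ā₂) = θ(a₁² + a₁a₂ + a₂²)/2^{k−1} mod 2ℤ, on representatives a₁, a₂ (this is well defined). Then there exists a group automorphism f of (ℤ/2^kℤ) × (ℤ/2^kℤ) with q(f(x)) = −q(x) for all x. -/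
/-- The discriminant form `q(a₁,a₂) = θ(a₁² + a₁a₂ + a₂²)/2^(k-1) mod 2ℤ`. -/
noncomputable def q13 (k : ℕ) (θ : ℤ) (a : ZMod (2 ^ k) × ZMod (2 ^ k)) : QModTwo :=
  toQ2 ((θ : ℚ) * ((a.1.val : ℚ) ^ 2 + (a.1.val : ℚ) * (a.2.val : ℚ) + (a.2.val : ℚ) ^ 2) /
    (2 : ℚ) ^ (k - 1))

/-!
The form `a₁² + a₁a₂ + a₂²` is the norm of `a₁ + a₂ω` in the quadratic algebra `R[ω]`, `ω² = ω - 1`,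
over `R = ℤ/2^k`. Since the norm is multiplicative, multiplication by an element `u` of norm `-1`
negates the form, and `u` is a unit because its norm is. Such a `u` exists: `1 + rω` has norm
`1 + r + r²`, and `r² + r + 2 = 0` is solvable in `R` by Hensel lifting from `r = 0`, as `2` is
nilpotent and the derivative at `0` is `1`.
-/

/-- The additive identification of the quadratic algebra `R[ω]/(ω² = a + bω)` with `R × R`, sending
`x + yω` to `(x, y)`. -/
def quadraticAlgebraAddEquivProd {R : Type*} [Add R] (a b : R) :
    QuadraticAlgebra R a b ≃+ R × R where
  __ := QuadraticAlgebra.equivProd a b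
  map_add' _ _ := rfl

section NormForm

variable {R : Type*} [CommRing R] {a b c : R}

open Polynomial in
theorem exists_quadratic_eq_zero_of_isNilpotent (hb : IsUnit b) (hc : IsNilpotent c) :
    ∃ r : R, a * r ^ 2 + b * r + c = 0 := by
  let P : R[X] := C a * X ^ 2 + C b * X + C c
  have eval_zero : aeval (0 : R) P = c := by simp [P]
  have eval_derivative_zero : aeval (0 : R) (derivative P) = b := by simp [P]
  obtain ⟨r, ⟨-, hr⟩, -⟩ :=
    existsUnique_nilpotent_sub_and_aeval_eq_zero (eval_zero ▸ hc) (eval_derivative_zero ▸ hb)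
  exact ⟨r, by simpa [P] using hr⟩

theorem exists_norm_eq_of_isNilpotent_one_sub (hb : IsUnit b) (hc : IsNilpotent (1 - c)) :
    ∃ z : QuadraticAlgebra R a b, z.norm = c := by
  obtain ⟨r, hr⟩ := exists_quadratic_eq_zero_of_isNilpotent (a := -a) hb hc
  refine ⟨⟨1, r⟩, ?_⟩
  rw [QuadraticAlgebra.norm_def]
  linear_combination hr

theorem exists_addEquiv_norm_eq_neg_norm (hb : IsUnit b) (h2 : IsNilpotent (2 : R)) :
    ∃ f : QuadraticAlgebra R a b ≃+ QuadraticAlgebra R a b, ∀ z, (f z).norm = -z.norm := by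
  obtain ⟨u, hu⟩ : ∃ u : QuadraticAlgebra R a b, u.norm = -1 :=
    exists_norm_eq_of_isNilpotent_one_sub hb (by rwa [sub_neg_eq_add, one_add_one_eq_two])
  have u_isUnit : IsUnit u := QuadraticAlgebra.isUnit_iff_norm_isUnit.2 (hu ▸ isUnit_one.neg)
  refine ⟨DistribMulAction.toAddEquiv _ u_isUnit.unit, fun z ↦ ?_⟩
  calc (u * z).norm = u.norm * z.norm := map_mul _ u z
    _ = -z.norm := by rw [hu, neg_one_mul]

end NormForm

theorem toQ2_two_mul_intCast (m : ℤ) : toQ2 (2 * m) = 0 :=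
  (QuotientAddGroup.eq_zero_iff _).2 (AddSubgroup.mem_zmultiples_iff.2 ⟨m, by simp [mul_comm]⟩)

theorem exists_addMonoidHom_intCast_eq_toQ2 {k : ℕ} (hk : 0 < k) (θ : ℤ) :
    ∃ φ : ZMod (2 ^ k) →+ QModTwo, ∀ m : ℤ, φ m = toQ2 (θ * m / 2 ^ (k - 1)) := by
  let ψ : ℤ →+ QModTwo :=
    toQ2.comp ((AddMonoidHom.mulLeft (θ / 2 ^ (k - 1) : ℚ)).comp (Int.castAddHom ℚ))
  have ψ_apply (m : ℤ) : ψ m = toQ2 (θ * m / 2 ^ (k - 1)) :=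
    congrArg toQ2 (div_mul_eq_mul_div _ _ _)
  have ψ_two_pow : ψ (2 ^ k : ℕ) = 0 := by
    obtain ⟨j, rfl⟩ := Nat.exists_eq_add_one.2 hk
    rw [ψ_apply, ← toQ2_two_mul_intCast θ, Nat.add_sub_cancel]
    congr 1
    push_cast
    field_simp
    ring
  exact ⟨ZMod.lift _ ⟨ψ, ψ_two_pow⟩, fun m ↦ (ZMod.lift_coe _ _ m).trans (ψ_apply m)⟩

theorem exists_addMonoidHom_norm_eq_q13 {k : ℕ} (hk : 0 < k) (θ : ℤ) :
    ∃ φ : ZMod (2 ^ k) →+ QModTwo, ∀ z : QuadraticAlgebra (ZMod (2 ^ k)) (-1) 1,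
      q13 k θ (quadraticAlgebraAddEquivProd (-1) 1 z) = φ z.norm := by
  obtain ⟨φ, hφ⟩ := exists_addMonoidHom_intCast_eq_toQ2 hk θ
  refine ⟨φ, fun ⟨x, y⟩ ↦ ?_⟩
  have norm_eq : (⟨x, y⟩ : QuadraticAlgebra (ZMod (2 ^ k)) (-1) 1).norm =
      ((x.val ^ 2 + x.val * y.val + y.val ^ 2 : ℤ) : ZMod (2 ^ k)) := by
    push_cast
    simp only [ZMod.natCast_zmod_val, QuadraticAlgebra.norm_def]
    ring
  rw [norm_eq, hφ]
  push_cast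
  rfl

theorem statement13_general (k : ℕ) (hk : 0 < k) (θ : ℤ) :
    ∃ f : (ZMod (2 ^ k) × ZMod (2 ^ k)) ≃+ (ZMod (2 ^ k) × ZMod (2 ^ k)),
      ∀ x, q13 k θ (f x) = - q13 k θ x := by
  have two_isNilpotent : IsNilpotent (2 : ZMod (2 ^ k)) :=
    ⟨k, mod_cast ZMod.natCast_self (2 ^ k)⟩
  obtain ⟨g, hg⟩ := exists_addEquiv_norm_eq_neg_norm (a := -1) isUnit_one two_isNilpotent
  obtain ⟨φ, hφ⟩ := exists_addMonoidHom_norm_eq_q13 hk θ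
  let e := quadraticAlgebraAddEquivProd (-1 : ZMod (2 ^ k)) 1
  refine ⟨(e.symm.trans g).trans e, e.surjective.forall.2 fun z ↦ ?_⟩
  calc q13 k θ (e (g (e.symm (e z)))) = φ (g z).norm := by rw [e.symm_apply_apply, hφ]
    _ = -φ z.norm := by rw [hg, map_neg]
    _ = -q13 k θ (e z) := by rw [hφ]

/-- for `k ≥ 1` and `θ` odd, the form
`q(a₁,a₂) = θ(a₁² + a₁a₂ + a₂²)/2^(k-1)` on `(ℤ/2^kℤ)²` admits an anti-automorphism. -/
theorem statement13 (k : ℕ) (hk : 0 < k) (θ : ℤ) (hθ : Odd θ) :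
    ∃ f : (ZMod (2 ^ k) × ZMod (2 ^ k)) ≃+ (ZMod (2 ^ k) × ZMod (2 ^ k)),
      ∀ x, q13 k θ (f x) = - q13 k θ x :=
  statement13_general k hk θ
end
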